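/- For every complex number q with 0 < |q| < 1, with x(q) = (q; q^2)_∞ / (q^3; q^6)_∞^3, one has 1/x(q)^2 − 2 q x(q) = 3 q^2 (q^2; q^2)_∞^2 (q^{12}; q^{12})_∞^6 / ((q^4; q^4)_∞^2 (q^6; q^6)_∞^6) + (q^4; q^4)_∞^6 / ((q^2; q^2)_∞^2 (q^6; q^6)_∞^2 (q^{12}; q^{12})_∞^2). -/

import Mathlib

/-- The q-shifted factorial `(a; q)_∞ = ∏_{n=0}^∞ (1 - a qⁿ)`. -/
noncomputable def qPoch (a q : ℂ) : ℂ := ∏' n : ℕ, (1 - a * q ^ n)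

/-- `x(q) = (q; q²)_∞ / (q³; q⁶)_∞³`. -/
noncomputable def x (q : ℂ) : ℂ := qPoch q (q ^ 2) / qPoch (q ^ 3) (q ^ 6) ^ 3

/-!
Write `θ(z; p) = (z; p)_∞ (p / z; p)_∞`. The Jacobi triple product, obtained as the limit of a
finite `q`-binomial theorem, makes `(p; p)_∞ θ(z; p)` a theta series, and sorting the terms of a
product of two theta series by the parity of the sum of the indices yields the classical quadratic
and three-term relations for `θ`.

Since `x(q) = θ(q; q⁶) / θ(q³; q⁶)`, these relations become `x(q) x(-q) = x(q²)`,
`x(-q) - x(q) = 2 q x(q²)²` and a formula for `1 + q x(q)³` as an eta quotient. Eliminating `x(-q)`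
from the first two expresses `1 / x(q)² - 2 q x(q)` through `y = x(q²)` as
`4 q² y² + 1 / y = 3 q² y² + (1 + q² y³) / y`, and both summands on the right are eta quotients.
-/

open Filter Finset Topology

section qPoch

variable {a q : ℂ}

lemma norm_pow_lt_one (hq : ‖q‖ < 1) {n : ℕ} (hn : n ≠ 0) : ‖q ^ n‖ < 1 := by
  rw [norm_pow]
  exact pow_lt_one₀ (norm_nonneg q) hq hn

lemma summable_norm_neg_mul_pow (a : ℂ) (hq : ‖q‖ < 1) :
    Summable fun n : ℕ ↦ ‖-(a * q ^ n)‖ := by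
  simpa only [norm_neg, norm_mul, norm_pow] using
    (summable_geometric_of_lt_one (norm_nonneg q) hq).mul_left ‖a‖

lemma multipliable_one_sub_mul_pow (a : ℂ) (hq : ‖q‖ < 1) :
    Multipliable fun n : ℕ ↦ 1 - a * q ^ n := by
  simpa only [sub_eq_add_neg] using
    multipliable_one_add_of_summable (summable_norm_neg_mul_pow a hq)

lemma one_sub_mul_pow_ne_zero (ha : ‖a‖ < 1) (hq : ‖q‖ < 1) (n : ℕ) : 1 - a * q ^ n ≠ 0 := by
  refine sub_ne_zero.mpr fun h ↦ ?_
  have hlt : ‖a * q ^ n‖ < 1 := by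
    rw [norm_mul, norm_pow]
    exact mul_lt_one_of_nonneg_of_lt_one_left (norm_nonneg a) ha
      (pow_le_one₀ (norm_nonneg q) hq.le)
  rw [← h, norm_one] at hlt
  exact lt_irrefl 1 hlt

lemma qPoch_ne_zero (ha : ‖a‖ < 1) (hq : ‖q‖ < 1) : qPoch a q ≠ 0 := by
  have h := tprod_one_add_ne_zero_of_summable
    (fun n ↦ by simpa only [sub_eq_add_neg] using one_sub_mul_pow_ne_zero ha hq n)
    (summable_norm_neg_mul_pow a hq)
  simpa only [qPoch, sub_eq_add_neg] using h

lemma qPoch_self_ne_zero (hq : ‖q‖ < 1) : qPoch q q ≠ 0 := qPoch_ne_zero hq hq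

lemma qPoch_mul_qPoch_neg (a : ℂ) (hq : ‖q‖ < 1) :
    qPoch a q * qPoch (-a) q = qPoch (a ^ 2) (q ^ 2) := by
  unfold qPoch
  rw [← (multipliable_one_sub_mul_pow a hq).tprod_mul (multipliable_one_sub_mul_pow (-a) hq)]
  exact tprod_congr fun n ↦ by ring

/-- The finite q-shifted factorial `(a; q)_n = ∏_{i < n} (1 - a qⁱ)`, the partial product of
`qPoch a q`. -/
noncomputable def qPochFin (a q : ℂ) (n : ℕ) : ℂ := ∏ i ∈ range n, (1 - a * q ^ i)

@[simp] lemma qPochFin_zero (a q : ℂ) : qPochFin a q 0 = 1 := prod_range_zero _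

lemma qPochFin_succ (a q : ℂ) (n : ℕ) :
    qPochFin a q (n + 1) = qPochFin a q n * (1 - a * q ^ n) := prod_range_succ _ n

lemma tendsto_qPochFin (a : ℂ) (hq : ‖q‖ < 1) :
    Tendsto (qPochFin a q) atTop (𝓝 (qPoch a q)) :=
  (multipliable_one_sub_mul_pow a hq).tendsto_prod_tprod_nat

lemma qPochFin_mul_eq_prod (a q : ℂ) (k n : ℕ) :
    qPochFin a q (k * n) = ∏ i ∈ range k, qPochFin (a * q ^ i) (q ^ k) n := by
  induction n with
  | zero => simp
  | succ n ih =>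
    simp only [qPochFin_succ, prod_mul_distrib, ← ih, mul_add_one]
    rw [qPochFin, prod_range_add]
    exact congrArg _ (prod_congr rfl fun i _ ↦ by ring)

lemma qPoch_eq_prod_qPoch_pow (a : ℂ) (hq : ‖q‖ < 1) {k : ℕ} (hk : 0 < k) :
    qPoch a q = ∏ i ∈ range k, qPoch (a * q ^ i) (q ^ k) := by
  refine tendsto_nhds_unique
    ((tendsto_qPochFin a hq).comp (tendsto_id.const_mul_atTop' hk)) ?_
  refine (tendsto_finsetProd (range k) fun i _ ↦
    tendsto_qPochFin (a * q ^ i) (norm_pow_lt_one hq hk.ne')).congr fun n ↦ ?_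
  exact (qPochFin_mul_eq_prod a q k n).symm

end qPoch

section GaussianBinomial

variable {p : ℂ}

/-- The reciprocal `1 / (p; p)_m` of a finite q-shifted factorial, extended by zero to `m < 0`. -/
noncomputable def qPochFinInv (p : ℂ) : ℤ → ℂ
  | .ofNat n => (qPochFin p p n)⁻¹
  | .negSucc _ => 0

lemma qPochFinInv_natCast (p : ℂ) (n : ℕ) : qPochFinInv p n = (qPochFin p p n)⁻¹ := rfl

lemma qPochFinInv_of_neg (p : ℂ) {m : ℤ} (hm : m < 0) : qPochFinInv p m = 0 := by
  obtain ⟨n, rfl⟩ := Int.eq_negSucc_of_lt_zero hm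
  rfl

lemma qPochFinInv_sub_one (hp : ‖p‖ < 1) (m : ℤ) :
    qPochFinInv p (m - 1) = (1 - p ^ m) * qPochFinInv p m := by
  rcases lt_trichotomy m 0 with hm | rfl | hm
  · simp [qPochFinInv_of_neg p hm, qPochFinInv_of_neg p (show m - 1 < 0 by lia)]
  · simp [qPochFinInv_of_neg p neg_one_lt_zero]
  · obtain ⟨n, rfl⟩ := Int.eq_succ_of_zero_lt hm
    have hfac := one_sub_mul_pow_ne_zero hp hp n
    rw [add_sub_cancel_right, qPochFinInv_natCast, ← Nat.cast_add_one, qPochFinInv_natCast,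
      zpow_natCast, qPochFin_succ, pow_succ']
    field_simp

lemma tendsto_qPochFinInv (hp : ‖p‖ < 1) :
    Tendsto (qPochFinInv p) atTop (𝓝 (qPoch p p)⁻¹) := by
  rw [← Nat.map_cast_int_atTop, tendsto_map'_iff]
  exact (tendsto_qPochFin p hp).inv₀ (qPoch_self_ne_zero hp)

/-- The centred Gaussian binomial coefficient `[2n choose n + j]` with base `p`, which vanishes
for `|j| > n`. -/
noncomputable def centralGaussBinom (p : ℂ) (n : ℕ) (j : ℤ) : ℂ :=
  qPochFin p p (2 * n) * qPochFinInv p (n - j) * qPochFinInv p (n + j)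

lemma centralGaussBinom_zero_zero (p : ℂ) : centralGaussBinom p 0 0 = 1 := by
  have h : qPochFinInv p 0 = 1 := by simpa using qPochFinInv_natCast p 0
  simp [centralGaussBinom, h]

lemma centralGaussBinom_zero_of_ne_zero (p : ℂ) {j : ℤ} (hj : j ≠ 0) :
    centralGaussBinom p 0 j = 0 := by
  rcases hj.lt_or_gt with hj | hj
  · simp [centralGaussBinom, qPochFinInv_of_neg p hj]
  · simp [centralGaussBinom, qPochFinInv_of_neg p (neg_lt_zero.mpr hj)]

lemma centralGaussBinom_succ (hp0 : p ≠ 0) (hp : ‖p‖ < 1) (n : ℕ) (j : ℤ) :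
    centralGaussBinom p (n + 1) j =
      (1 + p ^ (2 * n + 1)) * centralGaussBinom p n j
        + p ^ ((n : ℤ) + 1 - j) * centralGaussBinom p n (j - 1)
        + p ^ ((n : ℤ) + 1 + j) * centralGaussBinom p n (j + 1) := by
  have hstep (m : ℤ) : qPochFinInv p m = (1 - p ^ (m + 1)) * qPochFinInv p (m + 1) := by
    rw [← qPochFinInv_sub_one hp, add_sub_cancel_right]
  have hfin : qPochFin p p (2 * (n + 1)) =
      qPochFin p p (2 * n) * (1 - p ^ (2 * n + 1)) * (1 - p ^ (2 * n + 2)) := by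
    rw [mul_add_one, qPochFin_succ, qPochFin_succ]
    ring
  have hpj := zpow_ne_zero j hp0
  unfold centralGaussBinom
  rw [hfin, hstep (n - (j + 1)), hstep (n + (j - 1)),
    show (n : ℤ) - (j + 1) + 1 = n - j by ring, show (n : ℤ) + (j - 1) + 1 = n + j by ring,
    hstep (n - j), hstep (n + j), show (n : ℤ) - (j - 1) = n - j + 1 by ring,
    show (n : ℤ) + (j + 1) = n + j + 1 by ring, Nat.cast_add_one,
    show (n : ℤ) + 1 - j = n - j + 1 by ring, show (n : ℤ) + 1 + j = n + j + 1 by ring]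
  simp only [zpow_add₀ hp0, zpow_sub₀ hp0, zpow_natCast, zpow_one]
  field_simp
  ring

lemma tendsto_centralGaussBinom (hp : ‖p‖ < 1) (j : ℤ) :
    Tendsto (fun n ↦ centralGaussBinom p n j) atTop (𝓝 (qPoch p p)⁻¹) := by
  have hfin := (tendsto_qPochFin p hp).comp (tendsto_id.const_mul_atTop' two_pos)
  have hinv (i : ℤ) : Tendsto (fun n : ℕ ↦ qPochFinInv p (n + i)) atTop (𝓝 (qPoch p p)⁻¹) :=
    (tendsto_qPochFinInv hp).comp (tendsto_atTop_add_const_right _ i tendsto_natCast_atTop_atTop)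
  have h := (hfin.mul (hinv (-j))).mul (hinv j)
  rwa [mul_inv_cancel₀ (qPoch_self_ne_zero hp), one_mul] at h

lemma exists_norm_qPochFinInv_le (hp : ‖p‖ < 1) : ∃ C, ∀ m, ‖qPochFinInv p m‖ ≤ C := by
  obtain ⟨C, hC⟩ :=
    ((tendsto_qPochFin p hp).inv₀ (qPoch_self_ne_zero hp)).norm.bddAbove_range
  have hle (n : ℕ) : ‖qPochFinInv p n‖ ≤ C := hC ⟨n, rfl⟩
  refine ⟨C, fun m ↦ ?_⟩
  rcases m with n | n
  · exact hle n
  · simpa [qPochFinInv] using (norm_nonneg _).trans (hle 0)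

lemma exists_norm_centralGaussBinom_le (hp : ‖p‖ < 1) :
    ∃ C, ∀ n j, ‖centralGaussBinom p n j‖ ≤ C := by
  obtain ⟨C, hC⟩ := exists_norm_qPochFinInv_le hp
  obtain ⟨D, hD⟩ := (tendsto_qPochFin p hp).norm.bddAbove_range
  have hC0 : 0 ≤ C := (norm_nonneg _).trans (hC 0)
  have hD0 : 0 ≤ D := (norm_nonneg _).trans (hD ⟨0, rfl⟩)
  refine ⟨D * C * C, fun n j ↦ ?_⟩
  rw [centralGaussBinom, norm_mul, norm_mul]
  gcongr
  exacts [hD ⟨2 * n, rfl⟩, hC _, hC _]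

end GaussianBinomial

section thetaSeries

variable {s w : ℂ}

/-- Jacobi's theta series `∑ s^(j²) w^j` over `j ∈ ℤ`, in the nome `s` and the multiplicative
variable `w`. -/
noncomputable def thetaSeries (s w : ℂ) : ℂ := ∑' j : ℤ, s ^ (j ^ 2) * w ^ j

lemma summable_norm_pow_sq_mul_pow (hs0 : s ≠ 0) (hs : ‖s‖ < 1) (hw : w ≠ 0) :
    Summable fun n : ℕ ↦ ‖s ^ (n ^ 2) * w ^ n‖ := by
  have hne (n : ℕ) : ‖s ^ (n ^ 2) * w ^ n‖ ≠ 0 :=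
    norm_ne_zero_iff.mpr (mul_ne_zero (pow_ne_zero _ hs0) (pow_ne_zero _ hw))
  have hratio (n : ℕ) : ‖‖s ^ ((n + 1) ^ 2) * w ^ (n + 1)‖‖ / ‖‖s ^ (n ^ 2) * w ^ n‖‖ =
      (‖s‖ ^ 2) ^ n * (‖s‖ * ‖w‖) := by
    rw [norm_norm, norm_norm, div_eq_iff (hne n)]
    simp only [norm_mul, norm_pow]
    ring
  refine summable_of_ratio_test_tendsto_lt_one one_pos (.of_forall hne) ?_
  simpa only [hratio, zero_mul] using
    (tendsto_pow_atTop_nhds_zero_of_lt_one (sq_nonneg ‖s‖)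
      (pow_lt_one₀ (norm_nonneg s) hs two_ne_zero)).mul_const (‖s‖ * ‖w‖)

lemma summable_norm_thetaSeries (hs0 : s ≠ 0) (hs : ‖s‖ < 1) (hw : w ≠ 0) :
    Summable fun j : ℤ ↦ ‖s ^ (j ^ 2) * w ^ j‖ := by
  have hsq (n : ℕ) : s ^ ((n : ℤ) ^ 2) = s ^ (n ^ 2) := mod_cast zpow_natCast s (n ^ 2)
  refine .of_nat_of_neg ?_ ?_
  · simpa only [hsq, zpow_natCast] using summable_norm_pow_sq_mul_pow hs0 hs hw
  · simpa only [neg_sq, hsq, zpow_neg, zpow_natCast, inv_pow] using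
      summable_norm_pow_sq_mul_pow hs0 hs (inv_ne_zero hw)

lemma thetaSeries_div (hs0 : s ≠ 0) (hw : w ≠ 0) :
    thetaSeries s (w / s) = w * thetaSeries s (s * w) := by
  unfold thetaSeries
  rw [← (Equiv.addRight (1 : ℤ)).tsum_eq, ← tsum_mul_left]
  refine tsum_congr fun j ↦ ?_
  have hsj := zpow_ne_zero j hs0
  rw [Equiv.coe_addRight, show (j + 1) ^ 2 = j ^ 2 + j + j + 1 by ring, div_zpow, mul_zpow]
  simp only [zpow_add₀ hs0, zpow_add₀ hw, zpow_one]
  field_simp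

/-- The pairs of integers of even sum are `(k + l, k - l)` and those of odd sum are
`(k + l + 1, k - l)`. -/
noncomputable def sumParityEquiv : (ℤ × ℤ) ⊕ (ℤ × ℤ) ≃ ℤ × ℤ :=
  .ofBijective
    (Sum.elim (fun a ↦ (a.1 + a.2, a.1 - a.2)) fun a ↦ (a.1 + a.2 + 1, a.1 - a.2)) <| by
    constructor
    · rintro (⟨k, l⟩ | ⟨k, l⟩) (⟨k', l'⟩ | ⟨k', l'⟩) h <;>
        simp only [Sum.elim_inl, Sum.elim_inr, Prod.mk.injEq] at h <;>
        simp only [Sum.inl.injEq, Sum.inr.injEq, Prod.mk.injEq, reduceCtorEq] <;> lia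
    · rintro ⟨m, n⟩
      obtain ⟨k, hk | hk⟩ := Int.even_or_odd' (m + n)
      · exact ⟨.inl (k, m - k), by simp only [Sum.elim_inl, Prod.mk.injEq]; lia⟩
      · exact ⟨.inr (k, m - k - 1), by simp only [Sum.elim_inr, Prod.mk.injEq]; lia⟩

lemma thetaSeries_term_mul_even (hs0 : s ≠ 0) {a b : ℂ} (ha : a ≠ 0) (hb : b ≠ 0) (k l : ℤ) :
    s ^ ((k + l) ^ 2) * a ^ (k + l) * (s ^ ((k - l) ^ 2) * b ^ (k - l)) =
      (s ^ 2) ^ (k ^ 2) * (a * b) ^ k * ((s ^ 2) ^ (l ^ 2) * (a / b) ^ l) := by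
  have hs : s ^ ((k + l) ^ 2) * s ^ ((k - l) ^ 2) = (s ^ 2) ^ (k ^ 2) * (s ^ 2) ^ (l ^ 2) := by
    simp only [← zpow_natCast, ← zpow_mul, ← zpow_add₀ hs0]
    congr 1
    push_cast
    ring
  rw [mul_mul_mul_comm, hs, zpow_add₀ ha, zpow_sub₀ hb, mul_zpow, div_zpow]
  ring

lemma thetaSeries_term_mul_odd (hs0 : s ≠ 0) {a b : ℂ} (ha : a ≠ 0) (hb : b ≠ 0) (k l : ℤ) :
    s ^ ((k + l + 1) ^ 2) * a ^ (k + l + 1) * (s ^ ((k - l) ^ 2) * b ^ (k - l)) =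
      s * a * ((s ^ 2) ^ (k ^ 2) * (s ^ 2 * (a * b)) ^ k *
        ((s ^ 2) ^ (l ^ 2) * (s ^ 2 * (a / b)) ^ l)) := by
  have hs : s ^ ((k + l + 1) ^ 2) = s ^ ((k + l) ^ 2) * (s * (s ^ 2) ^ k * (s ^ 2) ^ l) := by
    rw [show (k + l + 1) ^ 2 = (k + l) ^ 2 + (1 + 2 * k + 2 * l) by ring]
    rw [zpow_add₀ hs0, zpow_add₀ hs0, zpow_one_add₀ hs0, zpow_mul, zpow_mul, zpow_ofNat]
  rw [hs, zpow_add_one₀ ha, mul_zpow (s ^ 2), mul_zpow (s ^ 2)]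
  linear_combination s * a * (s ^ 2) ^ k * (s ^ 2) ^ l * thetaSeries_term_mul_even hs0 ha hb k l

theorem thetaSeries_mul_thetaSeries (hs0 : s ≠ 0) (hs : ‖s‖ < 1) {a b : ℂ}
    (ha : a ≠ 0) (hb : b ≠ 0) :
    thetaSeries s a * thetaSeries s b =
      thetaSeries (s ^ 2) (a * b) * thetaSeries (s ^ 2) (a / b) +
        s * a * (thetaSeries (s ^ 2) (s ^ 2 * (a * b)) *
          thetaSeries (s ^ 2) (s ^ 2 * (a / b))) := by
  have hs20 : s ^ 2 ≠ 0 := pow_ne_zero 2 hs0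
  have hmul : a * b ≠ 0 := mul_ne_zero ha hb
  have hdiv : a / b ≠ 0 := div_ne_zero ha hb
  have hsum {w : ℂ} (hw : w ≠ 0) :=
    summable_norm_thetaSeries hs20 (norm_pow_lt_one hs two_ne_zero) hw
  have ha_sum := summable_norm_thetaSeries hs0 hs ha
  have hb_sum := summable_norm_thetaSeries hs0 hs hb
  have hprod : Summable fun i ↦ s ^ ((sumParityEquiv i).1 ^ 2) * a ^ (sumParityEquiv i).1 *
      (s ^ ((sumParityEquiv i).2 ^ 2) * b ^ (sumParityEquiv i).2) :=
    sumParityEquiv.summable_iff.mpr (summable_mul_of_summable_norm ha_sum hb_sum)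
  unfold thetaSeries
  rw [tsum_mul_tsum_of_summable_norm ha_sum hb_sum,
    tsum_mul_tsum_of_summable_norm (hsum hmul) (hsum hdiv),
    tsum_mul_tsum_of_summable_norm (hsum (mul_ne_zero hs20 hmul)) (hsum (mul_ne_zero hs20 hdiv)),
    ← tsum_mul_left, ← sumParityEquiv.tsum_eq,
    Summable.tsum_sum (hprod.comp_injective Sum.inl_injective)
      (hprod.comp_injective Sum.inr_injective)]
  congr 1
  · exact tsum_congr fun i ↦ thetaSeries_term_mul_even hs0 ha hb i.1 i.2
  · exact tsum_congr fun i ↦ thetaSeries_term_mul_odd hs0 ha hb i.1 i.2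

end thetaSeries

section TripleProduct

variable {s w : ℂ}

lemma centralGaussBinom_succ_mul (hs0 : s ≠ 0) (hs : ‖s‖ < 1) (hw : w ≠ 0) (n : ℕ) (j : ℤ) :
    centralGaussBinom (s ^ 2) (n + 1) j * (s ^ (j ^ 2) * w ^ j) =
      (1 + (s ^ 2) ^ (2 * n + 1)) * (centralGaussBinom (s ^ 2) n j * (s ^ (j ^ 2) * w ^ j)) +
        s ^ (2 * n + 1) * w *
          (centralGaussBinom (s ^ 2) n (j - 1) * (s ^ ((j - 1) ^ 2) * w ^ (j - 1))) +
        s ^ (2 * n + 1) / w *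
          (centralGaussBinom (s ^ 2) n (j + 1) * (s ^ ((j + 1) ^ 2) * w ^ (j + 1))) := by
  have hs20 : s ^ 2 ≠ 0 := pow_ne_zero 2 hs0
  have hsj := zpow_ne_zero j hs0
  rw [centralGaussBinom_succ hs20 (norm_pow_lt_one hs two_ne_zero),
    show (j - 1) ^ 2 = j ^ 2 - j - j + 1 by ring, show (j + 1) ^ 2 = j ^ 2 + j + j + 1 by ring]
  simp only [zpow_add₀ hs0, zpow_sub₀ hs0, zpow_add₀ hw, zpow_sub₀ hw, zpow_add₀ hs20,
    zpow_sub₀ hs20, zpow_natCast, zpow_one, show (s ^ 2) ^ j = s ^ j * s ^ j by rw [← mul_zpow, sq]]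
  field_simp
  ring

lemma hasSum_centralGaussBinom (hs0 : s ≠ 0) (hs : ‖s‖ < 1) (hw : w ≠ 0) (n : ℕ) :
    HasSum (fun j : ℤ ↦ centralGaussBinom (s ^ 2) n j * (s ^ (j ^ 2) * w ^ j))
      (qPochFin (-s * w) (s ^ 2) n * qPochFin (-s / w) (s ^ 2) n) := by
  induction n with
  | zero =>
    have hzero (j : ℤ) (hj : j ≠ 0) :
        centralGaussBinom (s ^ 2) 0 j * (s ^ (j ^ 2) * w ^ j) = 0 := by
      rw [centralGaussBinom_zero_of_ne_zero _ hj, zero_mul]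
    simpa [centralGaussBinom_zero_zero] using hasSum_single 0 hzero
  | succ n ih =>
    have hpred := (Equiv.subRight (1 : ℤ)).hasSum_iff.mpr ih
    have hsucc := (Equiv.addRight (1 : ℤ)).hasSum_iff.mpr ih
    have hfactor : qPochFin (-s * w) (s ^ 2) (n + 1) * qPochFin (-s / w) (s ^ 2) (n + 1) =
        (1 + (s ^ 2) ^ (2 * n + 1)) * (qPochFin (-s * w) (s ^ 2) n * qPochFin (-s / w) (s ^ 2) n) +
        s ^ (2 * n + 1) * w * (qPochFin (-s * w) (s ^ 2) n * qPochFin (-s / w) (s ^ 2) n) +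
        s ^ (2 * n + 1) / w * (qPochFin (-s * w) (s ^ 2) n * qPochFin (-s / w) (s ^ 2) n) := by
      rw [qPochFin_succ, qPochFin_succ]
      field_simp
      ring
    simp only [centralGaussBinom_succ_mul hs0 hs hw, hfactor]
    exact ((ih.mul_left _).add (hpred.mul_left _)).add (hsucc.mul_left _)

/-- The modified theta function `θ(z; p) = (z; p)_∞ (p / z; p)_∞`. -/
noncomputable def qTheta (z p : ℂ) : ℂ := qPoch z p * qPoch (p / z) p

theorem thetaSeries_eq_qPoch_mul_qTheta (hs0 : s ≠ 0) (hs : ‖s‖ < 1) (hw : w ≠ 0) :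
    thetaSeries s w = qPoch (s ^ 2) (s ^ 2) * qTheta (-s * w) (s ^ 2) := by
  have hp : ‖s ^ 2‖ < 1 := norm_pow_lt_one hs two_ne_zero
  obtain ⟨C, hC⟩ := exists_norm_centralGaussBinom_le hp
  have hseries : Tendsto
      (fun n ↦ ∑' j : ℤ, centralGaussBinom (s ^ 2) n j * (s ^ (j ^ 2) * w ^ j)) atTop
      (𝓝 ((qPoch (s ^ 2) (s ^ 2))⁻¹ * thetaSeries s w)) := by
    rw [thetaSeries, ← tsum_mul_left]
    refine tendsto_tsum_of_dominated_convergence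
      ((summable_norm_thetaSeries hs0 hs hw).mul_left C)
      (fun j ↦ (tendsto_centralGaussBinom hp j).mul_const _) (.of_forall fun n j ↦ ?_)
    rw [norm_mul]
    exact mul_le_mul_of_nonneg_right (hC n j) (norm_nonneg _)
  have hproduct : Tendsto
      (fun n ↦ ∑' j : ℤ, centralGaussBinom (s ^ 2) n j * (s ^ (j ^ 2) * w ^ j)) atTop
      (𝓝 (qTheta (-s * w) (s ^ 2))) := by
    simp only [(hasSum_centralGaussBinom hs0 hs hw _).tsum_eq]
    rw [qTheta, show s ^ 2 / (-s * w) = -s / w by field_simp]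
    exact (tendsto_qPochFin _ hp).mul (tendsto_qPochFin _ hp)
  rw [← tendsto_nhds_unique hseries hproduct, mul_inv_cancel_left₀ (qPoch_self_ne_zero hp)]

end TripleProduct

section qTheta

variable {p : ℂ}

lemma qTheta_div_left (hp0 : p ≠ 0) (z : ℂ) : qTheta (p / z) p = qTheta z p := by
  rw [qTheta, qTheta, div_div_cancel₀ hp0, mul_comm]

lemma qTheta_mul_qTheta_neg (hp : ‖p‖ < 1) (z : ℂ) :
    qTheta z p * qTheta (-z) p = qTheta (z ^ 2) (p ^ 2) := by
  rw [qTheta, qTheta, qTheta, ← qPoch_mul_qPoch_neg z hp, ← div_pow,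
    ← qPoch_mul_qPoch_neg (p / z) hp, div_neg]
  ring

lemma qPoch_sq_eq_mul_qTheta (hp0 : p ≠ 0) (hp : ‖p‖ < 1) :
    qPoch p p ^ 2 = qPoch (p ^ 2) (p ^ 2) ^ 2 * qTheta p (p ^ 2) := by
  have h := qPoch_eq_prod_qPoch_pow p hp (k := 2) two_pos
  simp only [prod_range_succ, prod_range_zero, pow_zero, pow_one, one_mul, mul_one, ← sq] at h
  rw [qTheta, h, show p ^ 2 / p = p by field_simp]
  ring

lemma qPoch_eq_qTheta_mul_qPoch_pow_three (hp0 : p ≠ 0) (hp : ‖p‖ < 1) :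
    qPoch p p = qTheta p (p ^ 3) * qPoch (p ^ 3) (p ^ 3) := by
  have h := qPoch_eq_prod_qPoch_pow p hp (k := 3) three_pos
  simp only [prod_range_succ, prod_range_zero, pow_one, one_mul, ← pow_succ',
    Nat.reduceAdd] at h
  rw [qTheta, h, show p ^ 3 / p = p ^ 2 by field_simp]

lemma qPoch_mul_qTheta_eq_thetaSeries {s z : ℂ} (hs0 : s ≠ 0) (hs : ‖s‖ < 1) (hz : z ≠ 0) :
    qPoch (s ^ 2) (s ^ 2) * qTheta z (s ^ 2) = thetaSeries s (-z / s) := by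
  rw [thetaSeries_eq_qPoch_mul_qTheta hs0 hs (div_ne_zero (neg_ne_zero.mpr hz) hs0),
    show -s * (-z / s) = z by field_simp]

lemma exists_sq_eq_and_norm_lt_one (hp0 : p ≠ 0) (hp : ‖p‖ < 1) :
    ∃ s : ℂ, s ^ 2 = p ∧ s ≠ 0 ∧ ‖s‖ < 1 := by
  obtain ⟨s, rfl⟩ := IsAlgClosed.exists_pow_nat_eq p two_pos
  refine ⟨s, rfl, ne_zero_pow two_ne_zero hp0, ?_⟩
  rwa [norm_pow, pow_lt_one_iff_of_nonneg (norm_nonneg s) two_ne_zero] at hp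

theorem qTheta_mul_sub_qTheta_neg_mul (hp0 : p ≠ 0) (hp : ‖p‖ < 1) {z w : ℂ}
    (hz : z ≠ 0) (hw : w ≠ 0) :
    qPoch p p ^ 2 * (qTheta z p * qTheta w p - qTheta (-z) p * qTheta (-w) p) =
      -2 * z * (qPoch (p ^ 2) (p ^ 2) ^ 2 *
        (qTheta (-(p * z * w)) (p ^ 2) * qTheta (-(w / z)) (p ^ 2))) := by
  obtain ⟨s, rfl, hs0, hs⟩ := exists_sq_eq_and_norm_lt_one hp0 hp
  have hT {y : ℂ} (hy : y ≠ 0) := qPoch_mul_qTheta_eq_thetaSeries hs0 hs hy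
  have hT2 {y : ℂ} (hy : y ≠ 0) := qPoch_mul_qTheta_eq_thetaSeries hp0 hp hy
  have hzs := div_ne_zero (neg_ne_zero.mpr hz) hs0
  have hws := div_ne_zero (neg_ne_zero.mpr hw) hs0
  have hpos := thetaSeries_mul_thetaSeries hs0 hs hzs hws
  have hneg := thetaSeries_mul_thetaSeries hs0 hs (neg_ne_zero.mpr hzs) (neg_ne_zero.mpr hws)
  have hneg_div {y : ℂ} : -(-y / s) = -(-y) / s := (neg_div s (-y)).symm
  rw [neg_mul_neg, neg_div_neg_eq, hneg_div, hneg_div, ← hT (neg_ne_zero.mpr hz),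
    ← hT (neg_ne_zero.mpr hw)] at hneg
  rw [← hT hz, ← hT hw] at hpos
  have hmul : thetaSeries (s ^ 2) (s ^ 2 * (-z / s * (-w / s))) =
      qPoch ((s ^ 2) ^ 2) ((s ^ 2) ^ 2) * qTheta (-(s ^ 2 * z * w)) ((s ^ 2) ^ 2) := by
    rw [hT2 (neg_ne_zero.mpr (mul_ne_zero (mul_ne_zero hp0 hz) hw))]
    congr 1
    field_simp
  have hdiv : thetaSeries (s ^ 2) (s ^ 2 * (-z / s / (-w / s))) =
      qPoch ((s ^ 2) ^ 2) ((s ^ 2) ^ 2) * qTheta (-(w / z)) ((s ^ 2) ^ 2) := by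
    rw [← qTheta_div_left (pow_ne_zero 2 hp0), hT2 (div_ne_zero (pow_ne_zero 2 hp0)
      (neg_ne_zero.mpr (div_ne_zero hw hz)))]
    congr 1
    field_simp
  rw [hmul, hdiv, mul_div_cancel₀ _ hs0] at hpos hneg
  linear_combination hpos - hneg

/-- The quasi-period turns the symmetric dissection `thetaSeries_mul_thetaSeries` into one that is
antisymmetric, up to the factor `a`, in `a` and `b`; three-term relations are then Plücker
relations. -/
lemma qPoch_sq_mul_qTheta_mul_qTheta_div (hp0 : p ≠ 0) (hp : ‖p‖ < 1) {a b : ℂ}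
    (ha : a ≠ 0) (hb : b ≠ 0) :
    qPoch p p ^ 2 * (qTheta (a * b) p * qTheta (a / b) p) =
      a * (a * thetaSeries p (p * a ^ 2) * thetaSeries p (b ^ 2) -
        thetaSeries p (a ^ 2) * (b * thetaSeries p (p * b ^ 2))) := by
  obtain ⟨s, rfl, hs0, hs⟩ := exists_sq_eq_and_norm_lt_one hp0 hp
  have hab := mul_ne_zero ha hb
  have hdiv := div_ne_zero ha hb
  have hmul := thetaSeries_mul_thetaSeries hs0 hs (div_ne_zero (neg_ne_zero.mpr hab) hs0)
    (div_ne_zero (neg_ne_zero.mpr hdiv) hs0)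
  rw [← qPoch_mul_qTheta_eq_thetaSeries hs0 hs hab, ← qPoch_mul_qTheta_eq_thetaSeries hs0 hs hdiv,
    show -(a * b) / s * (-(a / b) / s) = a ^ 2 / s ^ 2 by field_simp,
    show -(a * b) / s / (-(a / b) / s) = b ^ 2 by field_simp,
    thetaSeries_div hp0 (pow_ne_zero 2 ha), mul_div_cancel₀ _ hp0,
    show s * (-(a * b) / s) = -(a * b) by field_simp] at hmul
  linear_combination hmul

theorem qTheta_three_term (hp0 : p ≠ 0) (hp : ‖p‖ < 1) {a b c d : ℂ}
    (ha : a ≠ 0) (hb : b ≠ 0) (hc : c ≠ 0) (hd : d ≠ 0) :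
    qTheta (a * b) p * qTheta (a / b) p * (qTheta (c * d) p * qTheta (c / d) p) -
        qTheta (a * d) p * qTheta (a / d) p * (qTheta (c * b) p * qTheta (c / b) p) =
      c / b * (qTheta (b * d) p * qTheta (b / d) p * (qTheta (a * c) p * qTheta (a / c) p)) := by
  have h {y z : ℂ} (hy : y ≠ 0) (hz : z ≠ 0) := qPoch_sq_mul_qTheta_mul_qTheta_div hp0 hp hy hz
  have hE : qPoch p p ^ 2 ≠ 0 := pow_ne_zero 2 (qPoch_self_ne_zero hp)
  have hfactor {X Y : ℂ} : qPoch p p ^ 2 * (qPoch p p ^ 2 * (X * Y)) =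
    qPoch p p ^ 2 * X * (qPoch p p ^ 2 * Y) := by ring
  refine mul_left_cancel₀ hE (mul_left_cancel₀ hE ?_)
  rw [mul_sub, mul_sub, mul_left_comm _ (c / b), mul_left_comm _ (c / b), hfactor, hfactor,
    hfactor, h ha hb, h hc hd, h ha hd, h hc hb, h hb hd, h ha hc]
  field_simp
  ring

end qTheta

section CubicContinuedFraction

variable {q : ℂ}

lemma x_eq_qTheta_div_qTheta (hq0 : q ≠ 0) (hq : ‖q‖ < 1) :
    x q = qTheta q (q ^ 6) / qTheta (q ^ 3) (q ^ 6) := by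
  have hsplit := qPoch_eq_prod_qPoch_pow q (norm_pow_lt_one hq two_ne_zero) (k := 3) three_pos
  simp only [prod_range_succ, prod_range_zero, one_mul, mul_one, pow_one, ← pow_mul,
    ← pow_succ', Nat.reduceMul, Nat.reduceAdd] at hsplit
  have h3 : qPoch (q ^ 3) (q ^ 6) ≠ 0 :=
    qPoch_ne_zero (norm_pow_lt_one hq three_ne_zero) (norm_pow_lt_one hq (by decide))
  rw [x, qTheta, qTheta, hsplit, show q ^ 6 / q = q ^ 5 by field_simp,
    show q ^ 6 / q ^ 3 = q ^ 3 by field_simp]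
  field_simp

lemma x_neg_eq_qTheta_div_qTheta (hq0 : q ≠ 0) (hq : ‖q‖ < 1) :
    x (-q) = qTheta (-q) (q ^ 6) / qTheta (-q ^ 3) (q ^ 6) := by
  rw [x_eq_qTheta_div_qTheta (neg_ne_zero.mpr hq0) (by rwa [norm_neg]),
    Even.neg_pow (by decide), Odd.neg_pow (by decide)]

lemma x_sq_eq_qTheta_div_qTheta (hq0 : q ≠ 0) (hq : ‖q‖ < 1) :
    x (q ^ 2) = qTheta (q ^ 2) (q ^ 12) / qTheta (q ^ 6) (q ^ 12) := by
  rw [x_eq_qTheta_div_qTheta (pow_ne_zero 2 hq0) (norm_pow_lt_one hq two_ne_zero), ← pow_mul,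
    ← pow_mul]

lemma x_mul_x_neg (hq0 : q ≠ 0) (hq : ‖q‖ < 1) : x q * x (-q) = x (q ^ 2) := by
  have hp : ‖q ^ 6‖ < 1 := norm_pow_lt_one hq (by decide)
  rw [x_sq_eq_qTheta_div_qTheta hq0 hq, x_eq_qTheta_div_qTheta hq0 hq,
    x_neg_eq_qTheta_div_qTheta hq0 hq, div_mul_div_comm, qTheta_mul_qTheta_neg hp,
    qTheta_mul_qTheta_neg hp, ← pow_mul, ← pow_mul]

lemma x_neg_sub_x (hq0 : q ≠ 0) (hq : ‖q‖ < 1) : x (-q) - x q = 2 * q * x (q ^ 2) ^ 2 := by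
  have hp : ‖q ^ 6‖ < 1 := norm_pow_lt_one hq (by decide)
  have hp0 : q ^ 6 ≠ 0 := pow_ne_zero 6 hq0
  have hdiss := qTheta_mul_sub_qTheta_neg_mul hp0 hp (neg_ne_zero.mpr hq0) (pow_ne_zero 3 hq0)
  have hsq := qPoch_sq_eq_mul_qTheta hp0 hp
  have hmul := (mul_comm _ _).trans (qTheta_mul_qTheta_neg hp (q ^ 3))
  have hE12 := pow_ne_zero 2 (qPoch_self_ne_zero (norm_pow_lt_one hq (n := 12) (by decide)))
  rw [neg_neg, show -(q ^ 6 * -q * q ^ 3) = (q ^ 6) ^ 2 / q ^ 2 by field_simp,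
    show -(q ^ 3 / -q) = q ^ 2 by field_simp, qTheta_div_left (pow_ne_zero 2 hp0), hsq] at hdiss
  have hθ6 := right_ne_zero_of_mul (hsq ▸ pow_ne_zero 2 (qPoch_self_ne_zero hp))
  simp only [← pow_mul, Nat.reduceMul] at hdiss hmul hθ6
  have hθ3 := right_ne_zero_of_mul (hmul ▸ hθ6)
  have hθ3_neg := left_ne_zero_of_mul (hmul ▸ hθ6)
  rw [x_neg_eq_qTheta_div_qTheta hq0 hq, x_eq_qTheta_div_qTheta hq0 hq,
    x_sq_eq_qTheta_div_qTheta hq0 hq, div_sub_div _ _ hθ3_neg hθ3, hmul]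
  field_simp
  refine mul_left_cancel₀ hE12 ?_
  linear_combination hdiss

lemma x_ne_zero (hq : ‖q‖ < 1) : x q ≠ 0 :=
  div_ne_zero (qPoch_ne_zero hq (norm_pow_lt_one hq two_ne_zero))
    (pow_ne_zero 3 (qPoch_ne_zero (norm_pow_lt_one hq three_ne_zero)
      (norm_pow_lt_one hq (by decide))))

lemma one_div_x_sq_sub (hq0 : q ≠ 0) (hq : ‖q‖ < 1) :
    1 / x q ^ 2 - 2 * q * x q =
      3 * q ^ 2 * x (q ^ 2) ^ 2 + (1 + q ^ 2 * x (q ^ 2) ^ 3) / x (q ^ 2) := by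
  have hx : x q ≠ 0 := x_ne_zero hq
  have hx2 : x (q ^ 2) ≠ 0 := x_ne_zero (norm_pow_lt_one hq two_ne_zero)
  have hquad : x (q ^ 2) = x q ^ 2 + 2 * q * x q * x (q ^ 2) ^ 2 := by
    linear_combination x q * x_neg_sub_x hq0 hq - x_mul_x_neg hq0 hq
  field_simp
  linear_combination (1 + 2 * q * x q * x (q ^ 2)) * hquad

lemma qTheta_sq_pow_four (hq0 : q ≠ 0) (hq : ‖q‖ < 1) :
    qTheta (q ^ 2) (q ^ 6) ^ 4 = qTheta q (q ^ 6) * qTheta (q ^ 3) (q ^ 6) ^ 3 +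
      q * qTheta q (q ^ 6) ^ 4 := by
  have hp0 : q ^ 6 ≠ 0 := pow_ne_zero 6 hq0
  have h := qTheta_three_term hp0 (norm_pow_lt_one hq (by decide)) (pow_ne_zero 3 hq0) hq0
    (pow_ne_zero 2 hq0) one_ne_zero
  rw [show q ^ 3 * q = q ^ 6 / q ^ 2 by field_simp, show q ^ 3 / q = q ^ 2 by field_simp,
    show q ^ 2 * q = q ^ 3 by ring, show q ^ 2 / q = q by field_simp,
    show q ^ 3 * q ^ 2 = q ^ 6 / q by field_simp, show q ^ 3 / q ^ 2 = q by field_simp,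
    qTheta_div_left hp0, qTheta_div_left hp0] at h
  simp only [mul_one, div_one] at h
  linear_combination h

lemma qTheta_sq_eq_qPoch (hq0 : q ≠ 0) (hq : ‖q‖ < 1) :
    qTheta (q ^ 2) (q ^ 6) = qPoch (q ^ 2) (q ^ 2) / qPoch (q ^ 6) (q ^ 6) := by
  rw [eq_div_iff (qPoch_self_ne_zero (norm_pow_lt_one hq (by decide))),
    qPoch_eq_qTheta_mul_qPoch_pow_three (pow_ne_zero 2 hq0) (norm_pow_lt_one hq two_ne_zero),
    ← pow_mul]

lemma qTheta_cube_eq_qPoch (hq0 : q ≠ 0) (hq : ‖q‖ < 1) :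
    qTheta (q ^ 3) (q ^ 6) = qPoch (q ^ 3) (q ^ 3) ^ 2 / qPoch (q ^ 6) (q ^ 6) ^ 2 := by
  rw [eq_div_iff (pow_ne_zero 2 (qPoch_self_ne_zero (norm_pow_lt_one hq (by decide)))),
    qPoch_sq_eq_mul_qTheta (pow_ne_zero 3 hq0) (norm_pow_lt_one hq three_ne_zero), ← pow_mul,
    mul_comm]

lemma qTheta_eq_qPoch (hq0 : q ≠ 0) (hq : ‖q‖ < 1) :
    qTheta q (q ^ 6) = qPoch q q * qPoch (q ^ 6) (q ^ 6) /
      (qPoch (q ^ 2) (q ^ 2) * qPoch (q ^ 3) (q ^ 3)) := by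
  have hsplit := qPoch_eq_prod_qPoch_pow q hq (k := 6) (by decide)
  have hsplit3 := qPoch_eq_prod_qPoch_pow (q ^ 3) (norm_pow_lt_one hq three_ne_zero)
    (k := 2) two_pos
  simp only [prod_range_succ, prod_range_zero, pow_one, one_mul, mul_one, ← pow_mul,
    ← pow_add, ← pow_succ', Nat.reduceAdd, Nat.reduceMul] at hsplit hsplit3
  have h2 := qTheta_sq_eq_qPoch hq0 hq
  have hE2 := qPoch_self_ne_zero (norm_pow_lt_one hq two_ne_zero)
  have hE3 := qPoch_self_ne_zero (norm_pow_lt_one hq three_ne_zero)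
  have hE6 := qPoch_self_ne_zero (norm_pow_lt_one hq (n := 6) (by decide))
  rw [eq_div_iff hE6] at h2
  rw [eq_div_iff (mul_ne_zero hE2 hE3), ← h2, hsplit, hsplit3, qTheta, qTheta,
    show q ^ 6 / q = q ^ 5 by field_simp, show q ^ 6 / q ^ 2 = q ^ 4 by field_simp]
  ring

lemma x_eq_qPoch (hq0 : q ≠ 0) (hq : ‖q‖ < 1) :
    x q = qPoch q q * qPoch (q ^ 6) (q ^ 6) ^ 3 /
      (qPoch (q ^ 2) (q ^ 2) * qPoch (q ^ 3) (q ^ 3) ^ 3) := by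
  have hE6 := qPoch_self_ne_zero (norm_pow_lt_one hq (n := 6) (by decide))
  rw [x_eq_qTheta_div_qTheta hq0 hq, qTheta_eq_qPoch hq0 hq, qTheta_cube_eq_qPoch hq0 hq]
  field_simp

lemma one_add_mul_x_cube_eq_qPoch (hq0 : q ≠ 0) (hq : ‖q‖ < 1) :
    1 + q * x q ^ 3 = qPoch (q ^ 2) (q ^ 2) ^ 5 * qPoch (q ^ 6) (q ^ 6) /
      (qPoch q q * qPoch (q ^ 3) (q ^ 3) ^ 5) := by
  have hE1 := qPoch_self_ne_zero hq
  have hE2 := qPoch_self_ne_zero (norm_pow_lt_one hq two_ne_zero)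
  have hE3 := qPoch_self_ne_zero (norm_pow_lt_one hq three_ne_zero)
  have hE6 := qPoch_self_ne_zero (norm_pow_lt_one hq (n := 6) (by decide))
  have h := qTheta_sq_pow_four hq0 hq
  rw [qTheta_eq_qPoch hq0 hq, qTheta_sq_eq_qPoch hq0 hq, qTheta_cube_eq_qPoch hq0 hq] at h
  rw [x_eq_qPoch hq0 hq]
  field_simp at h ⊢
  linear_combination -h

end CubicContinuedFraction

theorem cubic_continued_fraction_identity (q : ℂ) (hq0 : 0 < ‖q‖) (hq1 : ‖q‖ < 1) :
    1 / x q ^ 2 - 2 * q * x q =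
      3 * q ^ 2 * qPoch (q ^ 2) (q ^ 2) ^ 2 * qPoch (q ^ 12) (q ^ 12) ^ 6 /
          (qPoch (q ^ 4) (q ^ 4) ^ 2 * qPoch (q ^ 6) (q ^ 6) ^ 6) +
        qPoch (q ^ 4) (q ^ 4) ^ 6 /
          (qPoch (q ^ 2) (q ^ 2) ^ 2 * qPoch (q ^ 6) (q ^ 6) ^ 2 *
            qPoch (q ^ 12) (q ^ 12) ^ 2) := by
  have hq : q ≠ 0 := norm_pos_iff.mp hq0
  have hx := x_eq_qPoch (pow_ne_zero 2 hq) (norm_pow_lt_one hq1 two_ne_zero)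
  have hcube := one_add_mul_x_cube_eq_qPoch (pow_ne_zero 2 hq) (norm_pow_lt_one hq1 two_ne_zero)
  simp only [← pow_mul, Nat.reduceMul] at hx hcube
  have hE {n : ℕ} (hn : n ≠ 0) := qPoch_self_ne_zero (norm_pow_lt_one hq1 hn)
  have hE2 := hE two_ne_zero
  have hE4 := hE four_ne_zero
  have hE6 := hE (n := 6) (by decide)
  have hE12 := hE (n := 12) (by decide)
  rw [one_div_x_sq_sub hq hq1, hcube, hx]
  field_simp
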